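/- Let μ be the product of n symmetric Bernoulli distributions μ_i = (1/2)δ_{+1} + (1/2)δ_{−1} on {±1}. Let f : ℝⁿ → ℝ be given by f(x_1,…,x_n) = Σ_{i<j} α_{ij} x_i x_j + Σ_{i<j<k} α_{ijk} x_i x_j x_k + … (sum up to order n), with arbitrary real coefficients α_{i_1…i_d} and no constant or linear terms. Set B := sup_{x ∈ {±1}ⁿ} ‖𝔇^{(2)} f(x)‖_{HS}. Then ∫ exp( |f| / (5B) ) dμ ≤ 2. -/

import Mathlib

/-!
Identify `{±1}ⁿ` with `Fin n → Bool`, with uniform expectation `E`, and let `u = |𝔇f|` be the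
Euclidean norm of the gradient. The proof uses the logarithmic Sobolev inequality
`Ent (exp g) ≤ ½ E[|𝔇g|² exp g]` (`cube_lsi`), obtained by tensorizing the elementary inequality
`t tanh t - log cosh t ≤ t² / 2`, at two levels.

For `f` itself, the Herbst argument together with the variational formula for entropy gives
`E exp (g - E g) ≤ E exp |𝔇g|²` (`bobkov_gotze`); with `g = ± c f`, `c = 2 / (5B)`, and `E f = 0` it
remains to bound `E exp (c² u²)`.

For `u`, a reverse triangle inequality shows `|𝔇u| ≤ ‖𝔇⁽²⁾f‖_HS ≤ B` (`cubeD_grad`), so that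
`E exp (l u) ≤ exp (l E u + l² B² / 2)` for every real `l` (`subgaussian`). As `f` has no linear
terms, the Poincaré inequality gives `(E u)² ≤ E u² ≤ B²` (`grad_l2`). Integrating the sub-Gaussian
bound against a Gaussian in `l` (`exp_sq_bound`) yields
`E exp (c² u²) ≤ (17/25)^(-1/2) exp (4/17) ≤ 2`. Hence
`(E exp (|f| / (5B)))² ≤ E exp (c f) + E exp (-c f) ≤ 4`.
-/

open MeasureTheory

variable {n : ℕ} {Ω : Fin n → Type*} [∀ i, MeasurableSpace (Ω i)]

/-- The coordinatewise L²-difference operator `𝔡ᵢ`. -/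
noncomputable def dd (μ : ∀ i, Measure (Ω i)) (f : (∀ i, Ω i) → ℝ) (i : Fin n)
    (x : ∀ i, Ω i) : ℝ :=
  Real.sqrt ((1 / 2) * ∫ y, (f x - f (Function.update x i y)) ^ 2 ∂(μ i))

/-- The Euclidean norm `|𝔡f(x)|`. -/
noncomputable def ddNorm (μ : ∀ i, Measure (Ω i)) (f : (∀ i, Ω i) → ℝ)
    (x : ∀ i, Ω i) : ℝ :=
  Real.sqrt (∑ i, dd μ f i x ^ 2)

/-- The difference operator `𝔇ᵢ f(x) = f(x) − ∫ f(x₁,…,yᵢ,…,xₙ) μᵢ(dyᵢ)`. -/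
noncomputable def DD (μ : ∀ i, Measure (Ω i)) (f : (∀ i, Ω i) → ℝ) (i : Fin n)
    (x : ∀ i, Ω i) : ℝ :=
  f x - ∫ y, f (Function.update x i y) ∂(μ i)

/-- The squared Hilbert–Schmidt norm `‖𝔇⁽²⁾f(x)‖²_HS` of the de-diagonalized Hessian,
whose `(i,j)` entry is `𝔇ᵢⱼ f(x)` for `i ≠ j` and `0` on the diagonal. -/
noncomputable def D2HSsq (μ : ∀ i, Measure (Ω i)) (f : (∀ i, Ω i) → ℝ)
    (x : ∀ i, Ω i) : ℝ :=
  ∑ i, ∑ j, if i = j then 0 else DD μ (DD μ f j) i x ^ 2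

/-- `h` is a family of Hoeffding kernels: `h S` depends only on the coordinates in `S`,
is integrable in each coordinate, and integrates to zero in each of its own variables. -/
structure IsHoeffdingKernels (μ : ∀ i, Measure (Ω i))
    (h : Finset (Fin n) → (∀ i, Ω i) → ℝ) : Prop where
  meas : ∀ S, Measurable (h S)
  localized : ∀ S, ∀ x y : ∀ i, Ω i, (∀ i ∈ S, x i = y i) → h S x = h S y
  integrable : ∀ S, ∀ i : Fin n, ∀ x : ∀ i, Ω i,
    Integrable (fun y => h S (Function.update x i y)) (μ i)
  degenerate : ∀ S, ∀ i ∈ S, ∀ x : ∀ i, Ω i,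
    (∫ y, h S (Function.update x i y) ∂(μ i)) = 0

open scoped ENNReal

/-! ### Averages and differences on the cube -/

/-- Expectation over the uniform distribution on `{false, true}ⁿ`. -/
noncomputable def cubeE {n : ℕ} (F : (Fin n → Bool) → ℝ) : ℝ := (∑ x, F x) / 2 ^ n

/-- Negation of the `i`-th coordinate. -/
def cubeFlip {n : ℕ} (i : Fin n) (x : Fin n → Bool) : Fin n → Bool :=
  Function.update x i (!x i)

/-- The difference operator `𝔇ᵢ` on the Boolean cube, where averaging over the `i`-th coordinate
is averaging over `x` and its flip. -/
noncomputable def cubeD {n : ℕ} (i : Fin n) (F : (Fin n → Bool) → ℝ) (x : Fin n → Bool) : ℝ :=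
  (F x - F (cubeFlip i x)) / 2

theorem cubeE_mono {n : ℕ} {F G : (Fin n → Bool) → ℝ} (h : ∀ x, F x ≤ G x) :
    cubeE F ≤ cubeE G := by
  unfold cubeE
  gcongr with x
  exact h x

theorem cubeE_add {n : ℕ} (F G : (Fin n → Bool) → ℝ) :
    cubeE (fun x => F x + G x) = cubeE F + cubeE G := by
  simp [cubeE, Finset.sum_add_distrib, add_div]

theorem cubeE_sub {n : ℕ} (F G : (Fin n → Bool) → ℝ) :
    cubeE (fun x => F x - G x) = cubeE F - cubeE G := by
  simp [cubeE, Finset.sum_sub_distrib, sub_div]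

theorem cubeE_const_mul {n : ℕ} (c : ℝ) (F : (Fin n → Bool) → ℝ) :
    cubeE (fun x => c * F x) = c * cubeE F := by
  simp [cubeE, ← Finset.mul_sum, mul_div_assoc]

theorem cubeE_neg {n : ℕ} (F : (Fin n → Bool) → ℝ) :
    cubeE (fun x => - F x) = - cubeE F := by
  simp [cubeE, neg_div]

theorem cubeE_const {n : ℕ} (c : ℝ) : cubeE (fun _ : Fin n → Bool => c) = c := by
  simp [cubeE]

theorem cubeE_sum {n : ℕ} {ι : Type*} (s : Finset ι) (F : ι → (Fin n → Bool) → ℝ) :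
    cubeE (fun x => ∑ i ∈ s, F i x) = ∑ i ∈ s, cubeE (F i) := by
  simp only [cubeE]
  rw [Finset.sum_comm, Finset.sum_div]

theorem cubeE_pos {n : ℕ} {F : (Fin n → Bool) → ℝ} (h : ∀ x, 0 < F x) : 0 < cubeE F := by
  unfold cubeE
  have := Finset.sum_pos (fun x _ => h x) (Finset.univ_nonempty (α := Fin n → Bool))
  positivity

theorem cubeE_sq_le {n : ℕ} (F : (Fin n → Bool) → ℝ) :
    cubeE F ^ 2 ≤ cubeE (fun x => F x ^ 2) := by
  have h : 0 ≤ cubeE (fun x => (F x - cubeE F) ^ 2) := by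
    rw [← cubeE_const (n := n) 0]
    exact cubeE_mono fun x => sq_nonneg _
  have h2 : cubeE (fun x => (F x - cubeE F) ^ 2)
      = cubeE (fun x => F x ^ 2) - 2 * cubeE F * cubeE F + cubeE F ^ 2 := by
    conv_rhs =>
      rw [← cubeE_const_mul, ← cubeE_const (n := n) (cubeE F ^ 2), ← cubeE_sub, ← cubeE_add]
    congr 1; ext x
    ring
  nlinarith

theorem cubeFlip_flip {n : ℕ} (i : Fin n) (x : Fin n → Bool) :
    cubeFlip i (cubeFlip i x) = x := by
  simp [cubeFlip]

theorem cubeE_flip {n : ℕ} (i : Fin n) (F : (Fin n → Bool) → ℝ) :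
    cubeE (fun x => F (cubeFlip i x)) = cubeE F := by
  unfold cubeE
  congr 1
  exact Equiv.sum_comp (Function.Involutive.toPerm (cubeFlip i) (cubeFlip_flip i)) F

theorem cubeE_succ {n : ℕ} (F : (Fin (n + 1) → Bool) → ℝ) :
    cubeE F = (cubeE (fun x => F (Fin.cons false x)) + cubeE (fun x => F (Fin.cons true x))) / 2 := by
  have h : ∑ x, F x = ∑ b : Bool, ∑ x : Fin n → Bool, F (Fin.cons b x) := by
    rw [← (Fin.consEquiv (fun _ : Fin (n + 1) => Bool)).sum_comp, Fintype.sum_prod_type]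
    rfl
  simp only [cubeE, h, Fintype.sum_bool, pow_succ]
  field_simp
  ring

theorem cubeFlip_zero {n : ℕ} (b : Bool) (x : Fin n → Bool) :
    cubeFlip (0 : Fin (n + 1)) (Fin.cons b x : Fin (n + 1) → Bool) = Fin.cons (!b) x := by
  simp [cubeFlip]

theorem cubeFlip_succ {n : ℕ} (b : Bool) (x : Fin n → Bool) (i : Fin n) :
    cubeFlip i.succ (Fin.cons b x : Fin (n + 1) → Bool) = Fin.cons b (cubeFlip i x) := by
  simp [cubeFlip, Fin.cons_update]

/-! ### Poincaré and logarithmic Sobolev inequalities -/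

/-- Poincaré inequality on the cube: the variance is at most `E ∑ᵢ (𝔇ᵢF)²`. -/
theorem cube_poincare : ∀ {n : ℕ} (F : (Fin n → Bool) → ℝ),
    cubeE (fun x => F x ^ 2) ≤ cubeE F ^ 2 + cubeE (fun x => ∑ i, cubeD i F x ^ 2)
  | 0, F => by simp [cubeE]
  | n + 1, F => by
    have h0 := cube_poincare (fun x => F (Fin.cons false x))
    have h1 := cube_poincare (fun x => F (Fin.cons true x))
    have hsq := cubeE_sq_le (fun x : Fin n → Bool => (F (Fin.cons true x) - F (Fin.cons false x)) / 2)
    have e1 : cubeE (fun x : Fin n → Bool => (F (Fin.cons true x) - F (Fin.cons false x)) / 2)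
        = (cubeE (fun x => F (Fin.cons true x)) - cubeE (fun x => F (Fin.cons false x))) / 2 := by
      rw [← cubeE_sub, div_eq_inv_mul, ← cubeE_const_mul]
      simp only [div_eq_inv_mul]
    have e2 : cubeE (fun x : Fin n → Bool => ((F (Fin.cons false x) - F (Fin.cons true x)) / 2) ^ 2)
        = cubeE (fun x : Fin n → Bool => ((F (Fin.cons true x) - F (Fin.cons false x)) / 2) ^ 2) := by
      congr 1; ext x; ring
    rw [e1] at hsq
    rw [cubeE_succ (fun x => F x ^ 2), cubeE_succ F, cubeE_succ (fun x => ∑ i, cubeD i F x ^ 2)]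
    simp only [Fin.sum_univ_succ, cubeD, cubeFlip_zero, cubeFlip_succ, Bool.not_false, Bool.not_true] at *
    rw [cubeE_add, cubeE_add, e2]
    nlinarith

/-- The inequality `t tanh t - log cosh t ≤ t² / 2`, multiplied by `cosh t`. The difference of the
two sides vanishes at `0` and has derivative `t tanh² t`. -/
theorem tanh_ineq (t : ℝ) :
    t * Real.sinh t - Real.cosh t * Real.log (Real.cosh t) ≤ t ^ 2 / 2 * Real.cosh t := by
  wlog ht : 0 ≤ t generalizing t
  · have := this (-t) (by linarith)
    simpa using this
  let φ : ℝ → ℝ := fun t => t ^ 2 / 2 - t * (Real.sinh t / Real.cosh t) + Real.log (Real.cosh t)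
  have hd : ∀ t, HasDerivAt φ (t * (Real.sinh t / Real.cosh t) ^ 2) t := by
    intro t
    have hc := (Real.cosh_pos t).ne'
    have h1 := ((Real.hasDerivAt_sinh t).div (Real.hasDerivAt_cosh t) hc)
    have h2 := (Real.hasDerivAt_cosh t).log hc
    have h3 := (((hasDerivAt_id t).pow 2).div_const 2).sub ((hasDerivAt_id t).mul h1)
    refine (h3.add h2).congr_deriv ?_
    have := Real.cosh_sq t
    simp
    field_simp
    rw [this]
    ring
  have hm : MonotoneOn φ (Set.Ici 0) := by
    apply monotoneOn_of_deriv_nonneg (convex_Ici 0)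
    · exact fun t _ => (hd t).continuousAt.continuousWithinAt
    · exact fun t _ => (hd t).differentiableAt.differentiableWithinAt
    · intro t ht
      rw [interior_Ici] at ht
      rw [(hd t).deriv]
      exact mul_nonneg (le_of_lt ht) (sq_nonneg _)
  have h := hm (Set.mem_Ici.2 le_rfl) (Set.mem_Ici.2 ht) ht
  have hc := Real.cosh_pos t
  have h' : 0 ≤ t ^ 2 / 2 - t * (Real.sinh t / Real.cosh t) + Real.log (Real.cosh t) := by
    simpa [φ] using h
  have h'' := mul_nonneg h' hc.le
  have e : (t ^ 2 / 2 - t * (Real.sinh t / Real.cosh t) + Real.log (Real.cosh t)) * Real.cosh t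
    = t ^ 2 / 2 * Real.cosh t - t * Real.sinh t + Real.cosh t * Real.log (Real.cosh t) := by
    field_simp
  linarith

/-- Logarithmic Sobolev inequality on a two-point space with values `p`, `q`, in the exponential
form (and multiplied by `2`). -/
theorem two_point (p q : ℝ) :
    Real.exp p * (p - Real.log ((Real.exp p + Real.exp q) / 2))
      + Real.exp q * (q - Real.log ((Real.exp p + Real.exp q) / 2))
      ≤ ((p - q) / 2) ^ 2 / 2 * (Real.exp p + Real.exp q) := by
  -- centre and half-difference of `p` and `q`
  obtain ⟨c, t, rfl, rfl⟩ : ∃ c t : ℝ, p = c + t ∧ q = c + -t :=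
    ⟨(p + q) / 2, (p - q) / 2, by ring, by ring⟩
  have h := tanh_ineq t
  have hm : (Real.exp (c + t) + Real.exp (c + -t)) / 2 = Real.exp c * Real.cosh t := by
    rw [Real.exp_add, Real.exp_add, Real.cosh_eq]; ring
  rw [hm, Real.log_mul (Real.exp_pos c).ne' (Real.cosh_pos t).ne', Real.log_exp,
    Real.exp_add, Real.exp_add]
  have hs : Real.exp t - Real.exp (-t) = 2 * Real.sinh t := by rw [Real.sinh_eq]; ring
  have hc : Real.exp t + Real.exp (-t) = 2 * Real.cosh t := by rw [Real.cosh_eq]; ring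
  have := mul_le_mul_of_nonneg_left h (Real.exp_pos c).le
  calc _ = Real.exp c * (t * (Real.exp t - Real.exp (-t))
            - (Real.exp t + Real.exp (-t)) * Real.log (Real.cosh t)) := by ring
    _ = 2 * (Real.exp c * (t * Real.sinh t - Real.cosh t * Real.log (Real.cosh t))) := by
        rw [hs, hc]; ring
    _ ≤ 2 * (Real.exp c * (t ^ 2 / 2 * Real.cosh t)) := by linarith
    _ = _ := by rw [← mul_add, hc]; ring

/-- Log-sum inequality. It yields both the convexity of entropy used for tensorization and, with
`a = exp (t g)` and `c = exp W`, the variational bound `E[W exp (t g)] ≤ Ent (exp (t g)) +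
E[exp (t g)] log E[exp W]`. -/
theorem log_sum {n : ℕ} (a c : (Fin n → Bool) → ℝ) (ha : ∀ x, 0 < a x) (hc : ∀ x, 0 < c x) :
    cubeE a * (Real.log (cubeE a) - Real.log (cubeE c))
      ≤ cubeE (fun x => a x * (Real.log (a x) - Real.log (c x))) := by
  have hA := cubeE_pos ha
  have hC := cubeE_pos hc
  -- tangent line of the convex function `z log z` at `z = E a / E c`
  have key : ∀ x, a x * (Real.log (cubeE a) - Real.log (cubeE c)) + a x
      - cubeE a / cubeE c * c x ≤ a x * (Real.log (a x) - Real.log (c x)) := by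
    intro x
    have hax := ha x
    have hcx := hc x
    have h := Real.one_sub_inv_le_log_of_pos (x := a x * cubeE c / (c x * cubeE a)) (by positivity)
    rw [Real.log_div (by positivity) (by positivity), Real.log_mul hax.ne' hC.ne',
      Real.log_mul hcx.ne' hA.ne'] at h
    have h2 := mul_le_mul_of_nonneg_left h hax.le
    have e : a x * (1 - (a x * cubeE c / (c x * cubeE a))⁻¹) = a x - cubeE a / cubeE c * c x := by
      field_simp
    rw [e] at h2
    linarith
  have h := cubeE_mono key
  rw [cubeE_sub, cubeE_add, cubeE_const_mul, div_mul_cancel₀ _ hC.ne'] at h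
  have e : cubeE (fun x => a x * (Real.log (cubeE a) - Real.log (cubeE c)))
      = cubeE a * (Real.log (cubeE a) - Real.log (cubeE c)) := by
    rw [mul_comm, ← cubeE_const_mul]; simp only [mul_comm]
  linarith

/-- Logarithmic Sobolev inequality `Ent (exp g) ≤ ½ E[|𝔇g|² exp g]` on the cube, by induction on
the dimension. -/
theorem cube_lsi : ∀ {n : ℕ} (g : (Fin n → Bool) → ℝ),
    cubeE (fun x => g x * Real.exp (g x))
      ≤ cubeE (fun x => Real.exp (g x)) * Real.log (cubeE (fun x => Real.exp (g x)))
        + 1 / 2 * cubeE (fun x => (∑ i, cubeD i g x ^ 2) * Real.exp (g x))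
  | 0, g => by simp [cubeE, mul_comm]
  | n + 1, g => by
    have h0 := cube_lsi (fun x => g (Fin.cons false x))
    have h1 := cube_lsi (fun x => g (Fin.cons true x))
    set g0 : (Fin n → Bool) → ℝ := fun x => g (Fin.cons false x) with hg0
    set g1 : (Fin n → Bool) → ℝ := fun x => g (Fin.cons true x) with hg1
    have hm : ∀ x, 0 < (Real.exp (g0 x) + Real.exp (g1 x)) / 2 := fun x => by positivity
    have l0 := log_sum (fun x => Real.exp (g0 x)) (fun x => (Real.exp (g0 x) + Real.exp (g1 x)) / 2)
      (fun x => Real.exp_pos _) hm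
    have l1 := log_sum (fun x => Real.exp (g1 x)) (fun x => (Real.exp (g0 x) + Real.exp (g1 x)) / 2)
      (fun x => Real.exp_pos _) hm
    have tp := cubeE_mono (fun x => two_point (g0 x) (g1 x))
    have em : cubeE (fun x => (Real.exp (g0 x) + Real.exp (g1 x)) / 2)
        = (cubeE (fun x => Real.exp (g0 x)) + cubeE (fun x => Real.exp (g1 x))) / 2 := by
      rw [← cubeE_add, div_eq_inv_mul, ← cubeE_const_mul]
      simp only [div_eq_inv_mul]
    simp only [Real.log_exp] at l0 l1
    rw [cubeE_add] at tp
    rw [em] at l0 l1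
    rw [cubeE_succ (fun x => g x * Real.exp (g x)), cubeE_succ (fun x => Real.exp (g x)),
      cubeE_succ (fun x => (∑ i, cubeD i g x ^ 2) * Real.exp (g x))]
    have e0 : cubeE (fun x : Fin n → Bool => (∑ i, cubeD i g (Fin.cons false x) ^ 2) * Real.exp (g (Fin.cons false x)))
        + cubeE (fun x : Fin n → Bool => (∑ i, cubeD i g (Fin.cons true x) ^ 2) * Real.exp (g (Fin.cons true x)))
        = cubeE (fun x => (∑ i, cubeD i g0 x ^ 2) * Real.exp (g0 x))
          + cubeE (fun x => (∑ i, cubeD i g1 x ^ 2) * Real.exp (g1 x))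
          + 2 * cubeE (fun x => ((g0 x - g1 x) / 2) ^ 2 / 2 * (Real.exp (g0 x) + Real.exp (g1 x))) := by
      rw [← cubeE_const_mul, ← cubeE_add, ← cubeE_add, ← cubeE_add]
      congr 1; ext x
      simp only [Fin.sum_univ_succ, cubeD, cubeFlip_zero, cubeFlip_succ, Bool.not_false, Bool.not_true, hg0, hg1]
      ring
    rw [e0]
    change (cubeE (fun x => g0 x * Real.exp (g0 x)) + cubeE (fun x => g1 x * Real.exp (g1 x))) / 2 ≤
      (cubeE (fun x => Real.exp (g0 x)) + cubeE (fun x => Real.exp (g1 x))) / 2 *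
      Real.log ((cubeE (fun x => Real.exp (g0 x)) + cubeE (fun x => Real.exp (g1 x))) / 2) + _
    linarith

/-! ### Exponential moments -/

/-- Herbst argument: if `Ent (exp (t g)) ≤ c t² E[exp (t g)]` for `0 < t ≤ 1`, then
`t⁻¹ log E[exp (t g)] - c t` is nonincreasing on `(0, 1]`; its limit at `0` is `E g`. -/
theorem herbst {n : ℕ} (g : (Fin n → Bool) → ℝ) (c : ℝ)
    (h : ∀ t : ℝ, 0 < t → t ≤ 1 → cubeE (fun x => t * g x * Real.exp (t * g x))
      ≤ cubeE (fun x => Real.exp (t * g x)) * Real.log (cubeE (fun x => Real.exp (t * g x)))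
        + c * t ^ 2 * cubeE (fun x => Real.exp (t * g x))) :
    cubeE (fun x => Real.exp (g x)) ≤ Real.exp (cubeE g + c) := by
  set Z : ℝ → ℝ := fun t => cubeE (fun x => Real.exp (t * g x)) with hZ
  have hZpos : ∀ t, 0 < Z t := fun t => cubeE_pos fun x => Real.exp_pos _
  have hZd : ∀ t, HasDerivAt Z (cubeE (fun x => g x * Real.exp (t * g x))) t := by
    intro t
    simp only [hZ, cubeE]
    apply HasDerivAt.div_const
    apply HasDerivAt.fun_sum
    intro x _
    have := ((hasDerivAt_id t).mul_const (g x)).exp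
    refine this.congr_deriv ?_
    simp [mul_comm]
  have hK : ∀ t, HasDerivAt (fun t => Real.log (Z t))
      (cubeE (fun x => g x * Real.exp (t * g x)) / Z t) t :=
    fun t => (hZd t).log (hZpos t).ne'
  let ψ : ℝ → ℝ := fun t => Real.log (Z t) / t - t * c
  have hψ : ∀ t, 0 < t → HasDerivAt ψ
      ((cubeE (fun x => g x * Real.exp (t * g x)) / Z t * t - Real.log (Z t) * 1) / t ^ 2 - 1 * c) t :=
    fun t ht => ((hK t).div (hasDerivAt_id t) ht.ne').sub ((hasDerivAt_id t).mul_const c)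
  have hanti : AntitoneOn ψ (Set.Ioc 0 1) := by
    apply antitoneOn_of_deriv_nonpos (convex_Ioc 0 1)
    · exact fun t ht => (hψ t ht.1).continuousAt.continuousWithinAt
    · rw [interior_Ioc]
      exact fun t ht => (hψ t ht.1).differentiableAt.differentiableWithinAt
    · rw [interior_Ioc]
      intro t ht
      have ht0 : 0 < t := ht.1
      rw [(hψ t ht0).deriv]
      have h1 := h t ht.1 ht.2.le
      have e : cubeE (fun x => t * g x * Real.exp (t * g x))
          = t * cubeE (fun x => g x * Real.exp (t * g x)) := by
        rw [← cubeE_const_mul]; simp only [mul_assoc]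
      rw [e] at h1
      have hz := hZpos t
      change _ ≤ Z t * Real.log (Z t) + c * t ^ 2 * Z t at h1
      have h2 : cubeE (fun x => g x * Real.exp (t * g x)) / Z t * t
          ≤ Real.log (Z t) + c * t ^ 2 := by
        rw [div_mul_eq_mul_div, div_le_iff₀ hz]
        linarith
      have h3 : (cubeE (fun x => g x * Real.exp (t * g x)) / Z t * t - Real.log (Z t) * 1) / t ^ 2
          ≤ c := by
        rw [div_le_iff₀ (by positivity)]
        linarith
      linarith
  have hlim : Filter.Tendsto ψ (nhdsWithin 0 (Set.Ioi 0)) (nhds (cubeE g)) := by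
    have hZ0 : Z 0 = 1 := by simp [hZ, cubeE_const]
    have h1 := (hK 0).tendsto_slope_zero_right
    have h2 : Filter.Tendsto (fun t : ℝ => t * c) (nhdsWithin 0 (Set.Ioi 0)) (nhds (0 * c)) :=
      (Filter.tendsto_id.mono_left nhdsWithin_le_nhds).mul_const c
    have h3 := h1.sub h2
    simp only [hZ0, zero_add, Real.log_one, sub_zero, zero_mul, Real.exp_zero, mul_one, div_one,
      smul_eq_mul] at h3
    refine h3.congr fun t => ?_
    simp only [ψ]
    ring
  have hle : ψ 1 ≤ cubeE g := by
    apply ge_of_tendsto hlim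
    filter_upwards [Ioc_mem_nhdsGT (zero_lt_one (α := ℝ))] with t ht
    exact hanti ht ⟨zero_lt_one, le_rfl⟩ ht.2
  have h4 : Real.log (Z 1) ≤ cubeE g + c := by
    simp only [ψ] at hle
    linarith
  have h5 := (Real.log_le_iff_le_exp (hZpos 1)).1 h4
  simpa [hZ] using h5

theorem cubeD_const_mul {n : ℕ} (i : Fin n) (t : ℝ) (g : (Fin n → Bool) → ℝ) (x : Fin n → Bool) :
    cubeD i (fun x => t * g x) x = t * cubeD i g x := by
  simp only [cubeD]; ring

/-- The logarithmic Sobolev inequality for `t g`. -/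
theorem lsi_scaled {n : ℕ} (g : (Fin n → Bool) → ℝ) (t : ℝ) :
    cubeE (fun x => t * g x * Real.exp (t * g x))
      ≤ cubeE (fun x => Real.exp (t * g x)) * Real.log (cubeE (fun x => Real.exp (t * g x)))
        + t ^ 2 / 2 * cubeE (fun x => (∑ i, cubeD i g x ^ 2) * Real.exp (t * g x)) := by
  have h := cube_lsi (fun x => t * g x)
  simp only [cubeD_const_mul, mul_pow, ← Finset.mul_sum, mul_assoc, cubeE_const_mul] at h ⊢
  linarith

/-- Bobkov–Götze inequality: exponential moments of `g - E g` are controlled by those of the squared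
gradient `|𝔇g|²`, which need not be bounded uniformly. -/
theorem bobkov_gotze {n : ℕ} (g : (Fin n → Bool) → ℝ) :
    cubeE (fun x => Real.exp (g x))
      ≤ Real.exp (cubeE g) * cubeE (fun x => Real.exp (∑ i, cubeD i g x ^ 2)) := by
  have hpos : 0 < cubeE (fun x => Real.exp (∑ i, cubeD i g x ^ 2)) :=
    cubeE_pos fun x => Real.exp_pos _
  have hβ : 0 ≤ Real.log (cubeE (fun x => Real.exp (∑ i, cubeD i g x ^ 2))) := by
    apply Real.log_nonneg
    rw [← cubeE_const (n := n) 1]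
    exact cubeE_mono fun x => Real.one_le_exp (Finset.sum_nonneg fun i _ => sq_nonneg _)
  have h := herbst g (Real.log (cubeE (fun x => Real.exp (∑ i, cubeD i g x ^ 2)))) ?_
  · rwa [Real.exp_add, Real.exp_log hpos] at h
  intro t ht0 ht1
  have h1 := lsi_scaled g t
  have h2 := log_sum (fun x => Real.exp (t * g x)) (fun x => Real.exp (∑ i, cubeD i g x ^ 2))
    (fun x => Real.exp_pos _) (fun x => Real.exp_pos _)
  have hz : 0 < cubeE (fun x => Real.exp (t * g x)) := cubeE_pos fun x => Real.exp_pos _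
  simp only [Real.log_exp] at h2
  have e : cubeE (fun x => Real.exp (t * g x) * (t * g x - ∑ i, cubeD i g x ^ 2))
      = cubeE (fun x => t * g x * Real.exp (t * g x))
        - cubeE (fun x => (∑ i, cubeD i g x ^ 2) * Real.exp (t * g x)) := by
    rw [← cubeE_sub]; congr 1; ext x; ring
  rw [e] at h2
  set β := Real.log (cubeE (fun x => Real.exp (∑ i, cubeD i g x ^ 2)))
  set z := cubeE (fun x => Real.exp (t * g x))
  set w := cubeE (fun x => (∑ i, cubeD i g x ^ 2) * Real.exp (t * g x))
  set a := cubeE (fun x => t * g x * Real.exp (t * g x))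
  have ht2 : t ^ 2 ≤ 1 := by nlinarith
  have hzβ : 0 ≤ z * β := mul_nonneg hz.le hβ
  by_contra hcon
  push Not at hcon
  have h3 : w ≤ (a - z * Real.log z) + z * β := by linarith
  have h4 : a - z * Real.log z ≤ t ^ 2 / 2 * ((a - z * Real.log z) + z * β) := by
    have := mul_le_mul_of_nonneg_left h3 (show 0 ≤ t ^ 2 / 2 by positivity)
    linarith
  have h5 : 0 ≤ a - z * Real.log z := by nlinarith
  nlinarith

theorem subgaussian {n : ℕ} (u : (Fin n → Bool) → ℝ) (B : ℝ)
    (hu : ∀ x, ∑ i, cubeD i u x ^ 2 ≤ B ^ 2) (l : ℝ) :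
    cubeE (fun x => Real.exp (l * u x)) ≤ Real.exp (l * cubeE u + l ^ 2 * B ^ 2 / 2) := by
  have h := herbst (fun x => l * u x) (l ^ 2 * B ^ 2 / 2) ?_
  · rwa [cubeE_const_mul] at h
  intro t _ _
  refine (lsi_scaled (fun x => l * u x) t).trans ?_
  have h2 : cubeE (fun x => (∑ i, cubeD i (fun x => l * u x) x ^ 2) * Real.exp (t * (l * u x)))
      ≤ cubeE (fun x => (l ^ 2 * B ^ 2) * Real.exp (t * (l * u x))) := by
    apply cubeE_mono
    intro x
    simp only [cubeD_const_mul, mul_pow, ← Finset.mul_sum]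
    have := hu x
    gcongr
  rw [cubeE_const_mul] at h2
  have := mul_le_mul_of_nonneg_left h2 (show 0 ≤ t ^ 2 / 2 by positivity)
  linarith

theorem gauss_integral (b k : ℝ) (hb : 0 < b) :
    Integrable (fun x : ℝ => Real.exp (-b * x ^ 2 + k * x)) ∧
    ∫ x : ℝ, Real.exp (-b * x ^ 2 + k * x) = Real.exp (k ^ 2 / (4 * b)) * Real.sqrt (Real.pi / b) := by
  have e : (fun x : ℝ => Real.exp (-b * x ^ 2 + k * x))
      = fun x => Real.exp (k ^ 2 / (4 * b)) * Real.exp (-b * (x - k / (2 * b)) ^ 2) := by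
    ext x
    rw [← Real.exp_add]
    congr 1
    field_simp
    ring
  rw [e]
  constructor
  · exact ((integrable_exp_neg_mul_sq hb).comp_sub_right (k / (2 * b))).const_mul _
  · rw [integral_const_mul, integral_sub_right_eq_self (fun x => Real.exp (-b * x ^ 2)),
      integral_gaussian]

/-- A sub-Gaussian bound for `u` gives exponential integrability of `u²`, by writing `exp (c² v²)`
as the Gaussian integral `π^(-1/2) ∫ exp (-y² + 2 c v y) dy`. -/
theorem exp_sq_bound {n : ℕ} (u : (Fin n → Bool) → ℝ) (B m c : ℝ)
    (hu : ∀ l : ℝ, cubeE (fun x => Real.exp (l * u x)) ≤ Real.exp (l * m + l ^ 2 * B ^ 2 / 2))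
    (hc : 2 * c ^ 2 * B ^ 2 < 1) :
    cubeE (fun x => Real.exp (c ^ 2 * u x ^ 2))
      ≤ Real.exp (c ^ 2 * m ^ 2 / (1 - 2 * c ^ 2 * B ^ 2)) / Real.sqrt (1 - 2 * c ^ 2 * B ^ 2) := by
  set d := 1 - 2 * c ^ 2 * B ^ 2 with hd
  have hd0 : 0 < d := by linarith
  have hpi : 0 < Real.sqrt Real.pi := Real.sqrt_pos.2 Real.pi_pos
  have key : ∀ v : ℝ, ∫ y : ℝ, Real.exp (-1 * y ^ 2 + (2 * c * v) * y)
      = Real.exp (c ^ 2 * v ^ 2) * Real.sqrt Real.pi := by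
    intro v
    rw [(gauss_integral 1 (2 * c * v) one_pos).2]
    congr 2
    · ring
    · simp
  have h1 : cubeE (fun x => Real.exp (c ^ 2 * u x ^ 2)) * Real.sqrt Real.pi
      = ∫ y : ℝ, cubeE (fun x => Real.exp (-1 * y ^ 2 + (2 * c * u x) * y)) := by
    simp only [cubeE]
    rw [integral_div, integral_finsetSum _ fun x _ => (gauss_integral 1 (2 * c * u x) one_pos).1]
    simp only [key]
    rw [← Finset.sum_mul]
    ring
  have h2 : ∫ y : ℝ, cubeE (fun x => Real.exp (-1 * y ^ 2 + (2 * c * u x) * y))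
      ≤ ∫ y : ℝ, Real.exp (-d * y ^ 2 + (2 * c * m) * y) := by
    apply integral_mono
    · simp only [cubeE]
      exact (integrable_finsetSum _ fun x _ => (gauss_integral 1 (2 * c * u x) one_pos).1).div_const _
    · exact (gauss_integral d (2 * c * m) hd0).1
    · intro y
      have h3 := mul_le_mul_of_nonneg_left (hu (2 * c * y)) (Real.exp_pos (-1 * y ^ 2)).le
      rw [← cubeE_const_mul, ← Real.exp_add] at h3
      simp only [← Real.exp_add] at h3
      convert h3 using 1
      · refine congrArg cubeE (funext fun x => ?_)
        congr 1; ring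
      · simp only [hd]; congr 1; ring
  rw [← h1, (gauss_integral d (2 * c * m) hd0).2, Real.sqrt_div Real.pi_pos.le] at h2
  have h4 : (2 * c * m) ^ 2 / (4 * d) = c ^ 2 * m ^ 2 / d := by
    field_simp; ring
  rw [h4, ← mul_div_assoc, mul_comm (Real.exp _) (Real.sqrt _), mul_comm, mul_div_assoc] at h2
  exact le_of_mul_le_mul_left h2 hpi

/-! ### The gradient norm and the Hessian -/

/-- The identification of `Bool` with `{±1}`. -/
def cubeSgn (b : Bool) : ℝ := if b then 1 else -1

theorem cubeSgn_sq (b : Bool) : cubeSgn b ^ 2 = 1 := by cases b <;> simp [cubeSgn]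

theorem cubeSgn_not (b : Bool) : cubeSgn (!b) = - cubeSgn b := by cases b <;> simp [cubeSgn]

theorem cubeD_flip {n : ℕ} (i : Fin n) (F : (Fin n → Bool) → ℝ) (x : Fin n → Bool) :
    cubeD i F (cubeFlip i x) = - cubeD i F x := by
  simp only [cubeD, cubeFlip_flip]; ring

/-- The squared Hilbert–Schmidt norm of the de-diagonalized Hessian on the Boolean cube. -/
noncomputable def cubeHess {n : ℕ} (F : (Fin n → Bool) → ℝ) (x : Fin n → Bool) : ℝ :=
  ∑ i, ∑ j, if i = j then 0 else cubeD i (cubeD j F) x ^ 2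

/-- The Euclidean norm `|𝔇F|` of the gradient. -/
noncomputable def cubeGrad {n : ℕ} (F : (Fin n → Bool) → ℝ) (x : Fin n → Bool) : ℝ :=
  Real.sqrt (∑ i, cubeD i F x ^ 2)

theorem cubeGrad_sq {n : ℕ} (F : (Fin n → Bool) → ℝ) (x : Fin n → Bool) :
    cubeGrad F x ^ 2 = ∑ i, cubeD i F x ^ 2 :=
  Real.sq_sqrt (Finset.sum_nonneg fun _ _ => sq_nonneg _)

theorem rev_triangle {n : ℕ} (a b : Fin n → ℝ) :
    (Real.sqrt (∑ i, a i ^ 2) - Real.sqrt (∑ i, b i ^ 2)) ^ 2 ≤ ∑ i, (a i - b i) ^ 2 := by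
  have h := abs_norm_sub_norm_le (WithLp.toLp 2 a) (WithLp.toLp 2 b)
  have h2 := pow_le_pow_left₀ (abs_nonneg _) h 2
  rw [sq_abs] at h2
  rw [EuclideanSpace.norm_eq, EuclideanSpace.norm_eq, EuclideanSpace.norm_sq_eq] at h2
  simpa using h2

/-- The gradient of `|𝔇F|` is bounded by the de-diagonalized Hessian: flipping coordinate `i`
preserves `|𝔇ᵢF|`, so the diagonal terms drop out of the reverse triangle inequality. -/
theorem cubeD_grad {n : ℕ} (F : (Fin n → Bool) → ℝ) (x : Fin n → Bool) :
    ∑ i, cubeD i (cubeGrad F) x ^ 2 ≤ cubeHess F x := by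
  unfold cubeHess
  apply Finset.sum_le_sum
  intro i _
  have h := rev_triangle (fun j => |cubeD j F x|) (fun j => |cubeD j F (cubeFlip i x)|)
  simp only [sq_abs] at h
  have h2 : ∑ j, (|cubeD j F x| - |cubeD j F (cubeFlip i x)|) ^ 2
      ≤ ∑ j, 4 * (if i = j then 0 else cubeD i (cubeD j F) x ^ 2) := by
    apply Finset.sum_le_sum
    intro j _
    split_ifs with hij
    · subst hij
      simp [cubeD_flip]
    · have h3 := pow_le_pow_left₀ (abs_nonneg _)
        (abs_abs_sub_abs_le_abs_sub (cubeD j F x) (cubeD j F (cubeFlip i x))) 2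
      rw [sq_abs, sq_abs] at h3
      refine h3.trans (le_of_eq ?_)
      simp only [cubeD.eq_1 i (cubeD j F)]
      ring
  rw [← Finset.mul_sum] at h2
  have e : cubeD i (cubeGrad F) x ^ 2 = (Real.sqrt (∑ j, cubeD j F x ^ 2)
      - Real.sqrt (∑ j, cubeD j F (cubeFlip i x) ^ 2)) ^ 2 / 4 := by
    simp only [cubeD, cubeGrad]; ring
  rw [e]
  linarith

/-- If `F` has no linear terms, each `xᵢ 𝔇ᵢF` is centred and does not depend on `xᵢ`, so the
Poincaré inequality bounds its second moment by off-diagonal second differences. -/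
theorem grad_l2 {n : ℕ} (F : (Fin n → Bool) → ℝ)
    (hmean : ∀ i, cubeE (fun x => cubeSgn (x i) * F x) = 0) :
    cubeE (fun x => cubeGrad F x ^ 2) ≤ cubeE (cubeHess F) := by
  have hmean' : ∀ i, cubeE (fun x => cubeSgn (x i) * cubeD i F x) = 0 := by
    intro i
    have h := cubeE_flip i (fun x => cubeSgn (x i) * F x)
    have e : cubeE (fun x => cubeSgn (x i) * cubeD i F x)
        = 1 / 2 * (cubeE (fun x => cubeSgn (x i) * F x)
          + cubeE (fun x => cubeSgn (cubeFlip i x i) * F (cubeFlip i x))) := by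
      rw [← cubeE_add, ← cubeE_const_mul]
      congr 1; ext x
      simp only [cubeFlip, Function.update_self, cubeSgn_not, cubeD]
      ring
    rw [e, h, hmean i]
    norm_num
  have key : ∀ i, cubeE (fun x => cubeD i F x ^ 2)
      ≤ cubeE (fun x => ∑ j, if j = i then 0 else cubeD j (cubeD i F) x ^ 2) := by
    intro i
    have h := cube_poincare (fun x => cubeSgn (x i) * cubeD i F x)
    rw [hmean' i] at h
    simp only [mul_pow, cubeSgn_sq, one_mul] at h
    refine h.trans (le_of_eq ?_)
    rw [zero_pow two_ne_zero, zero_add]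
    congr 1; ext x
    apply Finset.sum_congr rfl
    intro j _
    split_ifs with hij
    · subst hij
      rw [cubeD, cubeD_flip]
      simp [cubeFlip, cubeSgn_not]
    · have : cubeFlip j x i = x i := by simp [cubeFlip, Function.update_of_ne (Ne.symm hij)]
      have e : cubeD j (fun x => cubeSgn (x i) * cubeD i F x) x
          = cubeSgn (x i) * cubeD j (cubeD i F) x := by
        rw [cubeD.eq_1 j, cubeD.eq_1 j, this]; ring
      rw [e, mul_pow, cubeSgn_sq, one_mul]
  simp only [cubeGrad_sq]
  rw [cubeE_sum]
  refine (Finset.sum_le_sum fun i _ => key i).trans (le_of_eq ?_)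
  rw [← cubeE_sum]
  congr 1; ext x
  rw [cubeHess, Finset.sum_comm]

/-- The exponential bound on the Boolean cube. -/
theorem cube_main {n : ℕ} (F : (Fin n → Bool) → ℝ) (B : ℝ) (hB : 0 < B)
    (hH : ∀ x, cubeHess F x ≤ B ^ 2)
    (h0 : cubeE F = 0) (hmean : ∀ i, cubeE (fun x => cubeSgn (x i) * F x) = 0) :
    cubeE (fun x => Real.exp (|F x| / (5 * B))) ≤ 2 := by
  -- Twice the target exponent `1 / (5B)`: the two tails together cost a factor `2`, which
  -- Cauchy–Schwarz reduces, from `E exp (c|F|) ≤ 4` to `E exp (c|F| / 2) ≤ 2`.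
  set c := 2 / (5 * B) with hc
  have hcB : c ^ 2 * B ^ 2 = 4 / 25 := by rw [hc]; field_simp; norm_num
  have hm : cubeE (cubeGrad F) ^ 2 ≤ B ^ 2 := by
    refine (cubeE_sq_le _).trans ((grad_l2 F hmean).trans ?_)
    rw [← cubeE_const (n := n) (B ^ 2)]
    exact cubeE_mono hH
  have hgrad : cubeE (fun x => Real.exp (c ^ 2 * cubeGrad F x ^ 2)) ≤ 2 := by
    refine (exp_sq_bound (cubeGrad F) B (cubeE (cubeGrad F)) c
      (subgaussian (cubeGrad F) B fun x => (cubeD_grad F x).trans (hH x)) (by nlinarith)).trans ?_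
    have e : 1 - 2 * c ^ 2 * B ^ 2 = 17 / 25 := by rw [mul_assoc, hcB]; norm_num
    rw [e, div_le_iff₀ (by positivity)]
    -- the exponent is at most `(4/25) / (17/25) = 4/17`, and `exp 1 ≤ 4 * (17/25)`
    have h1 : c ^ 2 * cubeE (cubeGrad F) ^ 2 / (17 / 25) ≤ 1 / 2 := by
      have := mul_le_mul_of_nonneg_left hm (sq_nonneg c)
      rw [div_le_iff₀ (by norm_num)]
      nlinarith
    refine (Real.exp_le_exp.2 h1).trans ?_
    rw [← pow_le_pow_iff_left₀ (by positivity) (by positivity) two_ne_zero]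
    rw [mul_pow, Real.sq_sqrt (by norm_num), ← Real.exp_nat_mul]
    have := Real.exp_one_lt_d9
    norm_num at this ⊢
    linarith
  have hside : ∀ ε : ℝ, ε ^ 2 = 1 → cubeE (fun x => Real.exp (ε * c * F x)) ≤ 2 := by
    intro ε hε
    have h := bobkov_gotze (fun x => ε * c * F x)
    rw [cubeE_const_mul, h0, mul_zero, Real.exp_zero, one_mul] at h
    refine h.trans (le_trans (le_of_eq ?_) hgrad)
    congr 1; ext x
    simp only [cubeD_const_mul, mul_pow, hε, one_mul, cubeGrad_sq, Finset.mul_sum]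
  have hsq : cubeE (fun x => Real.exp (|F x| / (5 * B))) ^ 2 ≤ 4 := by
    refine (cubeE_sq_le _).trans ?_
    have h1 := hside 1 (by norm_num)
    have h2 := hside (-1) (by norm_num)
    have h3 : cubeE (fun x => Real.exp (|F x| / (5 * B)) ^ 2)
        ≤ cubeE (fun x => Real.exp (1 * c * F x) + Real.exp (-1 * c * F x)) := by
      apply cubeE_mono
      intro x
      rw [← Real.exp_nat_mul]
      have e : ((2 : ℕ) : ℝ) * (|F x| / (5 * B)) = c * |F x| := by rw [hc]; push_cast; ring
      rw [e]
      rcases abs_cases (F x) with ⟨h, _⟩ | ⟨h, _⟩ <;> rw [h]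
      · rw [one_mul]; linarith [Real.exp_pos (-1 * c * F x)]
      · rw [show c * -F x = -1 * c * F x by ring]; linarith [Real.exp_pos (1 * c * F x)]
    rw [cubeE_add] at h3
    linarith
  nlinarith [cubeE_pos (F := fun x => Real.exp (|F x| / (5 * B))) fun x => Real.exp_pos _]

/-! ### Vanishing of constant and linear terms -/

theorem cubeE_eq_zero {n : ℕ} (j : Fin n) (G : (Fin n → Bool) → ℝ)
    (h : ∀ x, G (cubeFlip j x) = - G x) : cubeE G = 0 := by
  have h1 := cubeE_flip j G
  simp only [h, cubeE_neg] at h1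
  linarith

theorem prod_flip {n : ℕ} (S : Finset (Fin n)) (j : Fin n) (hj : j ∈ S) (x : Fin n → Bool) :
    ∏ k ∈ S, cubeSgn (cubeFlip j x k) = - ∏ k ∈ S, cubeSgn (x k) := by
  rw [← Finset.mul_prod_erase S _ hj, ← Finset.mul_prod_erase S (fun k => cubeSgn (x k)) hj]
  have h1 : cubeSgn (cubeFlip j x j) = - cubeSgn (x j) := by simp [cubeFlip, cubeSgn_not]
  have h2 : ∏ k ∈ S.erase j, cubeSgn (cubeFlip j x k) = ∏ k ∈ S.erase j, cubeSgn (x k) := by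
    apply Finset.prod_congr rfl
    intro k hk
    simp [cubeFlip, Function.update_of_ne (Finset.ne_of_mem_erase hk)]
  rw [h1, h2, neg_mul]

theorem chaos_mean {n : ℕ} (α : Finset (Fin n) → ℝ) :
    cubeE (fun x => ∑ S ∈ Finset.univ.filter (fun S : Finset (Fin n) => 2 ≤ S.card),
      α S * ∏ i ∈ S, cubeSgn (x i)) = 0 := by
  rw [cubeE_sum]
  apply Finset.sum_eq_zero
  intro S hS
  have hS2 : 2 ≤ S.card := (Finset.mem_filter.1 hS).2
  obtain ⟨j, hj⟩ := Finset.card_pos.1 (show 0 < S.card by omega)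
  apply cubeE_eq_zero j
  intro x
  rw [prod_flip S j hj, mul_neg]

theorem chaos_linear {n : ℕ} (α : Finset (Fin n) → ℝ) (i : Fin n) :
    cubeE (fun x => cubeSgn (x i) *
      ∑ S ∈ Finset.univ.filter (fun S : Finset (Fin n) => 2 ≤ S.card),
      α S * ∏ i ∈ S, cubeSgn (x i)) = 0 := by
  simp only [Finset.mul_sum]
  rw [cubeE_sum]
  apply Finset.sum_eq_zero
  intro S hS
  have hS2 : 1 < S.card := (Finset.mem_filter.1 hS).2
  obtain ⟨j, hj, hji⟩ := Finset.exists_mem_ne hS2 i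
  apply cubeE_eq_zero j
  intro x
  rw [prod_flip S j hj]
  simp only [cubeFlip, Function.update_of_ne hji.symm]
  ring

/-! ### Transfer to the product measure -/

/-- The embedding of the Boolean cube onto `{±1}ⁿ ⊆ ℝⁿ`. -/
def cubeEmb {n : ℕ} (x : Fin n → Bool) : Fin n → ℝ := fun i => cubeSgn (x i)

/-- Integration against the product of symmetric Bernoulli measures is averaging over the cube. -/
theorem integral_pi_eq_cubeE {n : ℕ} (μ : Fin n → Measure ℝ)
    (hμ : ∀ i, μ i = (1 / 2 : ℝ≥0∞) • Measure.dirac (1 : ℝ)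
      + (1 / 2 : ℝ≥0∞) • Measure.dirac (-1 : ℝ)) (G : (Fin n → ℝ) → ℝ) (hG : Measurable G) :
    ∫ x, G x ∂(Measure.pi μ) = cubeE (fun x => G (cubeEmb x)) := by
  let ν : Measure Bool := (1 / 2 : ℝ≥0∞) • Measure.dirac true + (1 / 2 : ℝ≥0∞) • Measure.dirac false
  have hν : IsProbabilityMeasure ν := ⟨by
    simp only [ν, Measure.add_apply, Measure.smul_apply, measure_univ, smul_eq_mul, mul_one]
    exact ENNReal.add_halves 1⟩
  have hs : Measurable cubeSgn := measurable_of_finite _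
  have hνs : ∀ b, ν {b} = 1 / 2 := by
    intro b
    cases b <;> simp [ν]
  have hmap : μ = fun i => Measure.map cubeSgn ν := by
    funext i
    rw [hμ i, Measure.map_add _ _ hs, Measure.map_smul, Measure.map_smul, Measure.map_dirac' hs,
      Measure.map_dirac' hs]
    simp [cubeSgn]
  have : IsProbabilityMeasure (Measure.map cubeSgn ν) := Measure.isProbabilityMeasure_map hs.aemeasurable
  rw [hmap, ← Measure.pi_map_pi (fun _ => hs.aemeasurable),
    integral_map (measurable_of_finite _).aemeasurable hG.aestronglyMeasurable,
    integral_fintype Integrable.of_finite, cubeE, Finset.sum_div]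
  apply Finset.sum_congr rfl
  intro x _
  simp only [Measure.real, Measure.pi_singleton, hνs]
  simp only [one_div, Finset.prod_const, Finset.card_univ, Fintype.card_fin, ENNReal.toReal_pow,
    ENNReal.toReal_inv, ENNReal.toReal_ofNat, inv_pow, smul_eq_mul, div_eq_inv_mul]
  rfl

theorem DD_cube {n : ℕ} (μ : Fin n → Measure ℝ)
    (hμ : ∀ i, μ i = (1 / 2 : ℝ≥0∞) • Measure.dirac (1 : ℝ)
      + (1 / 2 : ℝ≥0∞) • Measure.dirac (-1 : ℝ)) (f : (Fin n → ℝ) → ℝ) (i : Fin n)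
    (x : Fin n → Bool) :
    DD μ f i (cubeEmb x) = cubeD i (fun x => f (cubeEmb x)) x := by
  have hi : ∫ y, f (Function.update (cubeEmb x) i y) ∂(μ i)
      = (f (Function.update (cubeEmb x) i 1) + f (Function.update (cubeEmb x) i (-1))) / 2 := by
    rw [hμ i, integral_add_measure, integral_smul_measure, integral_smul_measure,
      integral_dirac, integral_dirac]
    · simp; ring
    · exact (integrable_dirac (by simp)).smul_measure (by simp)
    · exact (integrable_dirac (by simp)).smul_measure (by simp)
  have h1 : cubeEmb x = Function.update (cubeEmb x) i (cubeSgn (x i)) := by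
    simp [cubeEmb]
  have h2 : cubeEmb (cubeFlip i x) = Function.update (cubeEmb x) i (- cubeSgn (x i)) := by
    funext k
    by_cases hk : k = i
    · subst hk; simp [cubeEmb, cubeFlip, cubeSgn_not]
    · simp [cubeEmb, cubeFlip, Function.update_of_ne hk]
  rw [DD, hi, cubeD, h2]
  cases hx : x i <;> simp only [hx, cubeSgn, if_true, Bool.false_eq_true, if_false, neg_neg] at h1 ⊢
  all_goals
    rw [← h1]; ring

theorem D2HSsq_cube {n : ℕ} (μ : Fin n → Measure ℝ)
    (hμ : ∀ i, μ i = (1 / 2 : ℝ≥0∞) • Measure.dirac (1 : ℝ)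
      + (1 / 2 : ℝ≥0∞) • Measure.dirac (-1 : ℝ)) (f : (Fin n → ℝ) → ℝ) (x : Fin n → Bool) :
    D2HSsq μ f (cubeEmb x) = cubeHess (fun x => f (cubeEmb x)) x := by
  simp only [D2HSsq, cubeHess, DD_cube μ hμ]

/-- Proposition 6.2: for a Rademacher chaos `f` without constant and linear terms on
the discrete cube `{±1}ⁿ` with the uniform product measure, and
`B = sup_{x ∈ {±1}ⁿ} ‖𝔇⁽²⁾f(x)‖_HS`, one has `∫ exp(|f|/(5B)) dμ ≤ 2`. -/
theorem second_order_concentration_discrete_cube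
    {n : ℕ} (μ : Fin n → Measure ℝ) [∀ i, IsProbabilityMeasure (μ i)]
    (hμ : ∀ i, μ i = (1 / 2 : ℝ≥0∞) • Measure.dirac (1 : ℝ)
      + (1 / 2 : ℝ≥0∞) • Measure.dirac (-1 : ℝ))
    (α : Finset (Fin n) → ℝ) (f : (Fin n → ℝ) → ℝ)
    (hf : ∀ x, f x = ∑ S ∈ Finset.univ.filter (fun S : Finset (Fin n) => 2 ≤ S.card),
      α S * ∏ i ∈ S, x i)
    (B : ℝ)
    (hB : IsLUB {r : ℝ | ∃ x : Fin n → ℝ, (∀ i, x i = 1 ∨ x i = -1) ∧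
      r = Real.sqrt (D2HSsq μ f x)} B) :
    ∫ x, Real.exp (|f x| / (5 * B)) ∂(Measure.pi μ) ≤ 2 := by
  rcases eq_or_ne B 0 with rfl | hB0
  · -- for `B = 0` the exponent is the junk value `|f x| / 0 = 0`
    simp
  have hle : ∀ x : Fin n → Bool, Real.sqrt (D2HSsq μ f (cubeEmb x)) ≤ B := fun x =>
    hB.1 ⟨cubeEmb x, fun i => by cases hx : x i <;> simp [cubeEmb, cubeSgn, hx], rfl⟩
  have hBpos : 0 < B := lt_of_le_of_ne ((Real.sqrt_nonneg _).trans (hle fun _ => true)) hB0.symm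
  have hf' : f = fun x => ∑ S ∈ Finset.univ.filter (fun S : Finset (Fin n) => 2 ≤ S.card),
      α S * ∏ i ∈ S, x i := funext hf
  have hfm : Measurable f := by
    rw [hf']
    fun_prop
  rw [integral_pi_eq_cubeE μ hμ (fun x => Real.exp (|f x| / (5 * B))) (by fun_prop)]
  refine cube_main (fun x => f (cubeEmb x)) B hBpos (fun x => ?_) ?_ fun i => ?_
  · rw [← D2HSsq_cube μ hμ f x]
    exact (Real.sqrt_le_left hBpos.le).1 (hle x)
  · simp only [hf']
    exact chaos_mean α
  · simp only [hf']
    exact chaos_linear α i
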